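/- Let a < t0 be reals and let U : (a,t0) → ℝ^P be real-analytic, satisfying U′(t) = F(U(t), t) for all t ∈ (a,t0), where F is an ℝ^P-valued real-analytic map on an open set G ⊆ ℝ^P × ℝ containing {(U(t), t) : t ∈ (a,t0)}, uniformly Lipschitz-like at every point of G. Suppose there exist U0 ∈ ℝ^P with (U0, t0) ∈ G and a strictly increasing sequence t_h → t0 in (a,t0) such that U(t_h) → U0. Then lim_{t → t0⁻} U(t) = U0; consequently U admits a real-analytic continuation up to t0 solving the same equation. -/

import Mathlib

open Set

/-! Near `(U0, t0)` the velocity is bounded, so a solution that comes close to `U0` shortly before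
`t0` has no time left to escape from a small ball: this forces convergence, and the solution can be
glued at `t0` to the one given by the Picard–Lindelöf theorem.

For analyticity we work with an autonomous equation `γ' = v ∘ γ`. The rescaled curves
`y_e(s) = γ (t₀ + e * s)`, `s ∈ [0, 1]`, satisfy the fixed point equation
`y_e = γ t₀ + e • ∫₀ v ∘ y_e` in `C([0, 1], E)`. The operator `y ↦ v ∘ y` is analytic on this Banach
space, so the analytic implicit function theorem makes `y_e` analytic in the single parameter `e`,
and `γ (t₀ + e) = y_e(1)`. -/

section Superposition

open Filter Topology

variable {𝕜 E F K : Type*} [NontriviallyNormedField 𝕜]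
  [NormedAddCommGroup E] [NormedSpace 𝕜 E] [NormedAddCommGroup F] [NormedSpace 𝕜 F]
  [TopologicalSpace K] [CompactSpace K]

variable (K) in
/-- The multilinear map between spaces of continuous functions that applies `p` pointwise. Applied
to the Taylor coefficients of `f`, it gives those of the superposition operator `y ↦ f ∘ y`. -/
noncomputable def pointwiseMultilinear {n : ℕ} (p : E [×n]→L[𝕜] F) :
    C(K, E) [×n]→L[𝕜] C(K, F) :=
  MultilinearMap.mkContinuous
    { toFun := fun y => ⟨fun s => p fun i => y i s, by fun_prop⟩
      map_update_add' := fun {_} y i x x' => by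
        ext s
        convert! (p.compContinuousLinearMap
          fun _ => ContinuousMap.evalCLM 𝕜 s).map_update_add y i x x'
      map_update_smul' := fun {_} y i c x => by
        ext s
        convert! (p.compContinuousLinearMap
          fun _ => ContinuousMap.evalCLM 𝕜 s).map_update_smul y i c x }
    ‖p‖ fun y => by
      rw [ContinuousMap.norm_le _ (by positivity)]
      intro s
      refine (p.le_opNorm _).trans ?_
      gcongr with i
      exact (y i).norm_coe_le_norm s

lemma norm_pointwiseMultilinear_le {n : ℕ} (p : E [×n]→L[𝕜] F) :
    ‖pointwiseMultilinear K p‖ ≤ ‖p‖ :=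
  MultilinearMap.mkContinuous_norm_le _ (norm_nonneg _) _

theorem exists_analyticAt_superposition [CompleteSpace F] {f : E → F} {x₀ : E}
    (hf : AnalyticAt 𝕜 f x₀) :
    ∃ N : C(K, E) → C(K, F), AnalyticAt 𝕜 N (.const K x₀) ∧
      ∀ᶠ y in 𝓝 (.const K x₀), ∀ s, N y s = f (y s) := by
  obtain ⟨p, r, hp⟩ := hf
  let q : FormalMultilinearSeries 𝕜 C(K, E) C(K, F) := fun n => pointwiseMultilinear K (p n)
  have hrq : r ≤ q.radius :=
    hp.r_le.trans <| FormalMultilinearSeries.radius_le_of_le fun n =>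
      norm_pointwiseMultilinear_le (p n)
  have hq := ((q.hasFPowerSeriesOnBall (hp.r_pos.trans_le hrq)).mono hp.r_pos hrq).comp_sub
    (.const K x₀)
  rw [zero_add] at hq
  refine ⟨fun y => q.sum (y - .const K x₀), hq.analyticAt, ?_⟩
  filter_upwards [Metric.eball_mem_nhds _ hp.r_pos] with y hy s
  have hys : y s ∈ Metric.eball x₀ r := by
    have hdist : edist (y s) x₀ ≤ edist y (.const K x₀) := by
      have hle : dist (y s) (ContinuousMap.const K x₀ s) ≤ dist y (.const K x₀) :=
        ContinuousMap.dist_apply_le_dist s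
      rw [edist_dist, edist_dist]
      exact ENNReal.ofReal_le_ofReal hle
    exact hdist.trans_lt hy
  have hsum : HasSum (fun n => p n fun _ => y s - x₀) (q.sum (y - .const K x₀) s) :=
    (hq.hasSum_sub hy).mapL (ContinuousMap.evalCLM 𝕜 s)
  exact hsum.unique (hp.hasSum_sub hys)

end Superposition

section FixedPoint

open Filter Topology
open scoped ContDiff

variable {𝕜 X : Type*} [RCLike 𝕜] [NormedAddCommGroup X] [NormedSpace 𝕜 X] [CompleteSpace X]

theorem exists_analyticAt_eq_of_eq_add_smul {T : X → X} {y₀ : X} (hT : AnalyticAt 𝕜 T y₀) :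
    ∃ ψ : 𝕜 → X, AnalyticAt 𝕜 ψ 0 ∧
      ∀ᶠ z in 𝓝 ((0 : 𝕜), y₀), z.2 = y₀ + z.1 • T z.2 → z.2 = ψ z.1 := by
  let Φ : 𝕜 × X → X := fun z => z.2 - z.1 • T z.2
  have hΦ : AnalyticAt 𝕜 Φ (0, y₀) :=
    analyticAt_snd.sub (analyticAt_fst.smul (hT.comp_of_eq analyticAt_snd rfl))
  have hΦ₀ (y : X) : Φ (0, y) = y := by simp [Φ]
  have hpartial : fderiv 𝕜 Φ (0, y₀) ∘L .inr 𝕜 𝕜 X = .id 𝕜 X := by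
    have hcomp := hΦ.differentiableAt.hasFDerivAt.comp y₀ (hasFDerivAt_prodMk_right (0 : 𝕜) y₀)
    exact hcomp.unique ((hasFDerivAt_id y₀).congr_of_eventuallyEq (.of_forall hΦ₀))
  have hinv : (fderiv 𝕜 Φ (0, y₀) ∘L .inr 𝕜 𝕜 X).IsInvertible := by
    rw [hpartial]
    exact ⟨.refl 𝕜 X, rfl⟩
  have hcd : ContDiffAt 𝕜 ω Φ (0, y₀) := hΦ.contDiffAt
  refine ⟨hcd.implicitFunction (by simp) hinv,
    (hcd.contDiffAt_implicitFunction (by simp) hinv).analyticAt, ?_⟩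
  filter_upwards [hcd.eventually_apply_eq_iff_implicitFunction (by simp) hinv] with z hz hfix
  exact (hz.mp (by rw [hΦ₀]; exact sub_eq_of_eq_add hfix)).symm

end FixedPoint

section UnitPrimitive

open Filter Topology unitInterval

variable {E : Type*} [NormedAddCommGroup E] [NormedSpace ℝ E]

variable (E) in
/-- The Volterra operator `w ↦ (s ↦ ∫ τ in 0..s, w τ)` on `C([0, 1], E)`. The integrand is extended
to `ℝ` by constants, since interval integrals are taken over functions on `ℝ`. -/
noncomputable def unitPrimitive : C(I, E) →L[ℝ] C(I, E) :=
  LinearMap.mkContinuous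
    { toFun := fun w => ⟨fun s => ∫ τ in (0 : ℝ)..s, IccExtend zero_le_one w τ,
        (intervalIntegral.continuous_primitive
          (fun _ _ => w.continuous.Icc_extend'.intervalIntegrable _ _) 0).comp
            continuous_subtype_val⟩
      map_add' := fun v w => by
        ext s
        exact intervalIntegral.integral_add (v.continuous.Icc_extend'.intervalIntegrable _ _)
          (w.continuous.Icc_extend'.intervalIntegrable _ _)
      map_smul' := fun c w => by
        ext s
        exact intervalIntegral.integral_smul c _ }
    1 fun w => by
      rw [ContinuousMap.norm_le _ (by positivity)]
      intro s
      refine (intervalIntegral.norm_integral_le_of_norm_le_const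
        fun τ _ => w.norm_coe_le_norm (projIcc 0 1 zero_le_one τ)).trans ?_
      rw [sub_zero, abs_of_nonneg s.2.1, mul_comm]
      gcongr
      exact s.2.2

lemma unitPrimitive_apply (w : C(I, E)) (s : I) :
    unitPrimitive E w s = ∫ τ in (0 : ℝ)..s, IccExtend zero_le_one w τ := rfl

theorem eq_const_add_unitPrimitive [CompleteSpace E] {u : ℝ → E} {y w : C(I, E)}
    (hy : ∀ s : I, y s = u s) (hu : ∀ s : I, HasDerivAt u (w s) s) :
    y = .const I (u 0) + unitPrimitive E w := by
  ext s
  have hftc : ∫ τ in (0 : ℝ)..s, IccExtend zero_le_one w τ = u s - u 0 := by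
    refine intervalIntegral.integral_eq_sub_of_hasDerivAt (fun τ hτ => ?_)
      (w.continuous.Icc_extend'.intervalIntegrable _ _)
    rw [uIcc_of_le s.2.1] at hτ
    have hτI : τ ∈ Icc (0 : ℝ) 1 := ⟨hτ.1, hτ.2.trans s.2.2⟩
    rw [IccExtend_of_mem _ _ hτI]
    exact hu ⟨τ, hτI⟩
  rw [ContinuousMap.add_apply, ContinuousMap.const_apply, unitPrimitive_apply, hftc, hy,
    add_sub_cancel]

end UnitPrimitive

section Analyticity

open Filter Topology unitInterval

lemma exists_continuousMap_eventuallyEq {X : Type*} [TopologicalSpace X] {u : ℝ → X} {t₀ : ℝ}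
    (hu : ∀ᶠ t in 𝓝 t₀, ContinuousAt u t) : ∃ g : C(ℝ, X), g =ᶠ[𝓝 t₀] u := by
  obtain ⟨δ, hδ, hcont⟩ := (nhds_basis_Icc_pos t₀).eventually_iff.mp hu
  have hle : t₀ - δ ≤ t₀ + δ := by linarith
  have hu' : ContinuousOn u (Icc (t₀ - δ) (t₀ + δ)) := fun t ht => (hcont ht).continuousWithinAt
  refine ⟨⟨IccExtend hle ((Icc (t₀ - δ) (t₀ + δ)).domRestrict u), hu'.domRestrict.Icc_extend'⟩, ?_⟩
  filter_upwards [(nhds_basis_Icc_pos t₀).mem_of_mem hδ] with t ht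
  exact IccExtend_of_mem hle (domRestrict _ u) ht

lemma eventually_forall_unitInterval_add_mul {p : ℝ → Prop} {t₀ : ℝ} (hp : ∀ᶠ t in 𝓝 t₀, p t) :
    ∀ᶠ e in 𝓝 (0 : ℝ), ∀ s : I, p (t₀ + e * s) := by
  have hev : ∀ s ∈ (univ : Set I), ∀ᶠ z : ℝ × I in 𝓝 (0, s), p (t₀ + z.1 * z.2) := fun s _ => by
    have hcont : Continuous fun z : ℝ × I => t₀ + z.1 * z.2 := by fun_prop
    exact (hcont.tendsto' (0, s) t₀ (by simp)).eventually hp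
  exact (isCompact_univ.eventually_forall_of_forall_eventually hev).mono fun e he s => he s trivial

variable {E : Type*} [NormedAddCommGroup E] [NormedSpace ℝ E] [CompleteSpace E]

theorem analyticAt_of_isIntegralCurveAt {v : E → E} {γ : ℝ → E} {t₀ : ℝ}
    (hv : AnalyticAt ℝ v (γ t₀)) (hγ : IsIntegralCurveAt γ (fun _ => v) t₀) :
    AnalyticAt ℝ γ t₀ := by
  obtain ⟨N, hN, hNv⟩ := exists_analyticAt_superposition (K := I) hv
  obtain ⟨ψ, hψ, hunique⟩ := exists_analyticAt_eq_of_eq_add_smul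
    (((unitPrimitive E).analyticAt _).comp hN)
  obtain ⟨g, hg⟩ := exists_continuousMap_eventuallyEq (hγ.mono fun t ht => ht.continuousAt)
  let Y : C(ℝ, C(I, E)) := .curry ⟨fun z => g (t₀ + z.1 * z.2), by fun_prop⟩
  have hY₀ : Tendsto Y (𝓝 0) (𝓝 (.const I (γ t₀))) :=
    Y.continuous.tendsto' _ _ (by ext s; simp [Y, hg.self_of_nhds])
  have hYγ : ∀ᶠ e in 𝓝 (0 : ℝ), ∀ s : I, Y e s = γ (t₀ + e * s) :=
    eventually_forall_unitInterval_add_mul hg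
  have hYψ : ∀ᶠ e in 𝓝 (0 : ℝ), Y e = ψ e := by
    filter_upwards [hYγ, eventually_forall_unitInterval_add_mul hγ, hY₀.eventually hNv,
      (tendsto_id.prodMk_nhds hY₀).eventually hunique] with e hYe hγe hNe huniq
    have hderiv (s : I) : HasDerivAt (fun τ : ℝ => γ (t₀ + e * τ)) ((e • N (Y e)) s) s := by
      rw [ContinuousMap.smul_apply, hNe, hYe]
      have haff : HasDerivAt (fun τ : ℝ => t₀ + e * τ) e s := by
        simpa using ((hasDerivAt_id (s : ℝ)).const_mul e).const_add t₀
      exact (hγe s).scomp (s : ℝ) haff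
    refine huniq ?_
    simpa using eq_const_add_unitPrimitive (u := fun τ => γ (t₀ + e * τ)) hYe hderiv
  have hγψ : γ =ᶠ[𝓝 t₀] fun t => ContinuousMap.evalCLM ℝ (1 : I) (ψ (t - t₀)) := by
    have hsub : Tendsto (fun t => t - t₀) (𝓝 t₀) (𝓝 0) :=
      (continuous_sub_right t₀).tendsto' _ _ (sub_self t₀)
    filter_upwards [hsub.eventually (hYγ.and hYψ)] with t ht
    rw [← ht.2]
    simpa using (ht.1 1).symm
  have hψt : AnalyticAt ℝ (fun t => ψ (t - t₀)) t₀ := by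
    simpa using hψ.comp_sub t₀
  exact (((ContinuousMap.evalCLM (M := E) ℝ (1 : I)).analyticAt _).fun_comp hψt).congr hγψ.symm

end Analyticity

section Trapping

open Filter Topology

variable {E : Type*} [NormedAddCommGroup E] [NormedSpace ℝ E] {u u' : ℝ → E} {M : ℝ}

theorem norm_sub_le_of_norm_deriv_right_lt_on_closedBall {a b : ℝ} (hM : 0 ≤ M)
    (hu : ContinuousOn u (Icc a b)) (hu' : ∀ t ∈ Ico a b, HasDerivWithinAt u (u' t) (Ici t) t)
    (hbound : ∀ t ∈ Ico a b, u t ∈ Metric.closedBall (u a) (M * (b - a)) → ‖u' t‖ < M) :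
    ∀ t ∈ Icc a b, ‖u t - u a‖ ≤ M * (t - a) := by
  refine image_norm_le_of_norm_deriv_right_lt_deriv_boundary (f := fun t => u t - u a)
    (hu.sub continuousOn_const) (fun t ht => (hu' t ht).sub_const _) (by simp)
    (B' := fun _ => M) (fun t => ?_) fun t ht heq => hbound t ht ?_
  · simpa using ((hasDerivAt_id t).sub_const a).const_mul M
  · rw [mem_closedBall_iff_norm, heq]
    gcongr
    exact ht.2.le

theorem tendsto_nhdsLT_of_mapClusterPt_of_norm_deriv_le {t₀ : ℝ} {x₀ : E} {s : Set E}
    (hu : ∀ᶠ t in 𝓝[<] t₀, HasDerivAt u (u' t) t) (hs : s ∈ 𝓝 x₀)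
    (hM : ∀ᶠ t in 𝓝[<] t₀, u t ∈ s → ‖u' t‖ ≤ M) (hx₀ : MapClusterPt x₀ (𝓝[<] t₀) u) :
    Tendsto u (𝓝[<] t₀) (𝓝 x₀) := by
  obtain ⟨ρ, hρ, hρs⟩ := Metric.mem_nhds_iff.mp hs
  obtain ⟨c, hc, hcu⟩ := mem_nhdsLT_iff_exists_Ioo_subset.mp (hu.and hM)
  rw [Metric.tendsto_nhds]
  intro ε hε
  let L := |M| + 1
  let η := min ε ρ
  have hη : 0 < η := lt_min hε hρ
  have hshort : ∀ᶠ t in 𝓝[<] t₀, L * (t₀ - t) < η / 2 := by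
    have hcont : Continuous fun t => L * (t₀ - t) := by fun_prop
    exact (hcont.tendsto' t₀ 0 (by simp)).mono_left nhdsWithin_le_nhds |>.eventually_lt_const
      (half_pos hη)
  obtain ⟨b, hbx₀, hb, hbL⟩ :=
    ((hx₀.frequently (Metric.ball_mem_nhds x₀ (half_pos hη))).and_eventually
      (.and (Ioo_mem_nhdsLT hc) hshort)).exists
  filter_upwards [Ioo_mem_nhdsLT hb.2] with t ht
  have hsub : ∀ τ ∈ Icc b t, τ ∈ Ioo c t₀ := fun τ hτ =>
    ⟨hb.1.trans_le hτ.1, hτ.2.trans_lt ht.2⟩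
  have hderiv : ∀ τ ∈ Icc b t, HasDerivAt u (u' τ) τ := fun τ hτ => (hcu (hsub τ hτ)).1
  have hLt : L * (t - b) < η / 2 := lt_of_le_of_lt (by gcongr; exact ht.2.le) hbL
  have hclose {x : E} (hx : x ∈ Metric.closedBall (u b) (L * (t - b))) : dist x x₀ < η := calc
    dist x x₀ ≤ dist x (u b) + dist (u b) x₀ := dist_triangle _ _ _
    _ < η / 2 + η / 2 := add_lt_add (hx.trans_lt hLt) hbx₀
    _ = η := add_halves η
  have hdist := norm_sub_le_of_norm_deriv_right_lt_on_closedBall (M := L) (by positivity)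
    (fun τ hτ => (hderiv τ hτ).continuousAt.continuousWithinAt)
    (fun τ hτ => (hderiv τ (Ico_subset_Icc_self hτ)).hasDerivWithinAt)
    (fun τ hτ hτball => calc
      ‖u' τ‖ ≤ M := (hcu (hsub τ (Ico_subset_Icc_self hτ))).2
        (hρs ((hclose hτball).trans_le (min_le_right ε ρ)))
      _ < L := (le_abs_self M).trans_lt (lt_add_one _))
    t (right_mem_Icc.mpr ht.1.le)
  exact (hclose (mem_closedBall_iff_norm.mpr hdist)).trans_le (min_le_left ε ρ)

end Trapping

section Extension

open Filter Topology

variable {E : Type*} [NormedAddCommGroup E] [NormedSpace ℝ E] {a t₀ : ℝ}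

theorem hasDerivAt_piecewise_Iio {u w : ℝ → E} {d : E}
    (hu : ∀ᶠ t in 𝓝[<] t₀, DifferentiableAt ℝ u t) (hlim : Tendsto u (𝓝[<] t₀) (𝓝 (w t₀)))
    (hderiv : Tendsto (deriv u) (𝓝[<] t₀) (𝓝 d)) (hw : HasDerivWithinAt w d (Ici t₀) t₀) :
    HasDerivAt ((Iio t₀).piecewise u w) d t₀ := by
  let V := (Iio t₀).piecewise u w
  have hV : ∀ t ∈ Iio t₀, V =ᶠ[𝓝 t] u := fun t ht =>
    (piecewise_eqOn (Iio t₀) u w).eventuallyEq_of_mem (Iio_mem_nhds ht)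
  have hV₀ : V t₀ = w t₀ := piecewise_eq_of_notMem _ _ _ self_notMem_Iio
  have hleft : HasDerivWithinAt V d (Iic t₀) t₀ := by
    refine hasDerivWithinAt_Iic_of_tendsto_deriv
      (s := {t | t < t₀ ∧ DifferentiableAt ℝ u t}) (fun t ht => ?_) ?_
      (eventually_mem_nhdsWithin.and hu) (hderiv.congr' ?_)
    · exact (ht.2.congr_of_eventuallyEq (hV t ht.1)).differentiableWithinAt
    · refine ContinuousWithinAt.mono (t := Iio t₀) ?_ fun t ht => ht.1
      rw [ContinuousWithinAt, hV₀]
      exact hlim.congr' (eventually_nhdsWithin_of_forall fun t ht => (hV t ht).self_of_nhds.symm)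
    · exact eventually_nhdsWithin_of_forall fun t ht => (hV t ht).deriv_eq.symm
  have hright : HasDerivWithinAt V d (Ici t₀) t₀ :=
    hw.congr (fun t ht => piecewise_eq_of_notMem _ _ _ (notMem_Iio.mpr ht)) hV₀
  have hboth := hleft.union hright
  rwa [Iic_union_Ici, hasDerivWithinAt_univ] at hboth

variable [CompleteSpace E] {v : E → E} {γ : ℝ → E} {x₀ : E}

theorem exists_hasDerivAt_extension_of_tendsto_nhdsLT (hv : ContDiffAt ℝ 1 v x₀)
    (hγ : ∀ t ∈ Ioo a t₀, HasDerivAt γ (v (γ t)) t) (hlim : Tendsto γ (𝓝[<] t₀) (𝓝 x₀)) :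
    ∃ r > (0 : ℝ), ∃ V : ℝ → E, EqOn V γ (Iio t₀) ∧ V t₀ = x₀ ∧
      ∀ t ∈ Ioo a (t₀ + r), HasDerivAt V (v (V t)) t := by
  obtain ⟨w, rfl, r, hr, hw⟩ :=
    hv.exists_forall_mem_closedBall_exists_eq_forall_mem_Ioo_hasDerivAt₀ t₀
  have hV₀ : (Iio t₀).piecewise γ w t₀ = w t₀ := piecewise_eq_of_notMem _ _ _ self_notMem_Iio
  refine ⟨r, hr, (Iio t₀).piecewise γ w, piecewise_eqOn _ _ _, hV₀, fun t ht => ?_⟩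
  rcases lt_trichotomy t t₀ with hlt | rfl | hgt
  · have hVγ : (Iio t₀).piecewise γ w =ᶠ[𝓝 t] γ :=
      (piecewise_eqOn (Iio t₀) γ w).eventuallyEq_of_mem (Iio_mem_nhds hlt)
    rw [hVγ.self_of_nhds]
    exact (hγ t ⟨ht.1, hlt⟩).congr_of_eventuallyEq hVγ
  · rw [hV₀]
    have hγ' : ∀ᶠ s in 𝓝[<] t, HasDerivAt γ (v (γ s)) s :=
      mem_of_superset (Ioo_mem_nhdsLT ht.1) hγ
    exact hasDerivAt_piecewise_Iio (hγ'.mono fun s hs => hs.differentiableAt) hlim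
      ((hv.continuousAt.tendsto.comp hlim).congr' (hγ'.mono fun s hs => hs.deriv.symm))
      (hw t ⟨by linarith, by linarith⟩).hasDerivWithinAt
  · have hVw : (Iio t₀).piecewise γ w =ᶠ[𝓝 t] w :=
      (piecewise_eqOn_compl (Iio t₀) γ w).eventuallyEq_of_mem
        (mem_of_superset (Ioi_mem_nhds hgt) fun s hs => notMem_Iio.mpr (le_of_lt hs))
    rw [hVw.self_of_nhds]
    exact (hw t ⟨by linarith, ht.2⟩).congr_of_eventuallyEq hVw

theorem exists_analyticAt_extension_of_mapClusterPt (hat₀ : a < t₀)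
    (hγ : ∀ t ∈ Ioo a t₀, HasDerivAt γ (v (γ t)) t) (hvγ : ∀ t ∈ Ioo a t₀, AnalyticAt ℝ v (γ t))
    (hv : AnalyticAt ℝ v x₀) (hx₀ : MapClusterPt x₀ (𝓝[<] t₀) γ) :
    Tendsto γ (𝓝[<] t₀) (𝓝 x₀) ∧ ∃ r > (0 : ℝ), ∃ V : ℝ → E,
      (∀ t ∈ Ioo a (t₀ + r), AnalyticAt ℝ V t) ∧ EqOn V γ (Iio t₀) ∧ V t₀ = x₀ ∧
      ∀ t ∈ Ioo a (t₀ + r), HasDerivAt V (v (V t)) t := by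
  have hbound : ∀ᶠ x in 𝓝 x₀, ‖v x‖ ≤ ‖v x₀‖ + 1 :=
    hv.continuousAt.norm.eventually_le_const (lt_add_one _)
  have hlim : Tendsto γ (𝓝[<] t₀) (𝓝 x₀) :=
    tendsto_nhdsLT_of_mapClusterPt_of_norm_deriv_le
      (mem_of_superset (Ioo_mem_nhdsLT hat₀) hγ) hbound (.of_forall fun _ => id) hx₀
  obtain ⟨r, hr, V, hVγ, rfl, hV⟩ :=
    exists_hasDerivAt_extension_of_tendsto_nhdsLT hv.contDiffAt hγ hlim
  have hvV : ∀ᶠ t in 𝓝 t₀, AnalyticAt ℝ v (V t) :=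
    (hV t₀ ⟨hat₀, by linarith⟩).continuousAt.eventually hv.eventually_analyticAt
  obtain ⟨δ, hδ, hδV⟩ := (nhds_basis_Ioo_pos t₀).eventually_iff.mp hvV
  have hsub : Ioo a (t₀ + min r δ) ⊆ Ioo a (t₀ + r) :=
    Ioo_subset_Ioo_right (by gcongr; exact min_le_left r δ)
  refine ⟨hlim, min r δ, lt_min hr hδ, V, fun t ht => ?_, hVγ, rfl, fun t ht => hV t (hsub ht)⟩
  refine analyticAt_of_isIntegralCurveAt ?_
    (mem_of_superset (Ioo_mem_nhds ht.1 ht.2) fun s hs => hV s (hsub hs))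
  rcases lt_or_ge t t₀ with hlt | hge
  · rw [hVγ hlt]
    exact hvγ t ⟨ht.1, hlt⟩
  · exact hδV ⟨by linarith, ht.2.trans_le (by gcongr; exact min_le_right r δ)⟩

end Extension

section NonAutonomous

open Filter Topology

lemma mapClusterPt_prodMk {α X Y : Type*} [TopologicalSpace X] [TopologicalSpace Y]
    {l : Filter α} {u : α → X} {w : α → Y} {x : X} {y : Y} (hu : MapClusterPt x l u)
    (hw : Tendsto w l (𝓝 y)) : MapClusterPt (x, y) l fun t => (u t, w t) := by
  rw [((𝓝 x).basis_sets.prod_nhds (𝓝 y).basis_sets).mapClusterPt_iff_frequently]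
  exact fun s hs => (hu.frequently hs.1).and_eventually (hw.eventually hs.2)

theorem stmt_6_general {E : Type*} [NormedAddCommGroup E] [NormedSpace ℝ E] [CompleteSpace E]
    {a t0 : ℝ} (hat0 : a < t0) {U : ℝ → E} {F : E → ℝ → E} {U0 : E}
    (hFU : ∀ t ∈ Ioo a t0, AnalyticAt ℝ (fun q : E × ℝ => F q.1 q.2) (U t, t))
    (hF0 : AnalyticAt ℝ (fun q : E × ℝ => F q.1 q.2) (U0, t0))
    (hode : ∀ t ∈ Ioo a t0, HasDerivAt U (F (U t) t) t)
    (hU0 : MapClusterPt U0 (𝓝[<] t0) U) :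
    Tendsto U (𝓝[<] t0) (𝓝 U0) ∧
    ∃ r > (0 : ℝ), ∃ Uext : ℝ → E,
      (∀ t ∈ Ioo a (t0 + r), AnalyticAt ℝ Uext t) ∧
      (∀ t ∈ Ioo a t0, Uext t = U t) ∧ Uext t0 = U0 ∧
      (∀ t ∈ Ioo a (t0 + r), HasDerivAt Uext (F (Uext t) t) t) := by
  have hcluster : MapClusterPt (U0, t0) (𝓝[<] t0) fun t => (U t, t) :=
    mapClusterPt_prodMk hU0 (tendsto_id.mono_left nhdsWithin_le_nhds)
  obtain ⟨hlim, r, hr, V, hVan, hVγ, hV0, hV⟩ := exists_analyticAt_extension_of_mapClusterPt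
    (v := fun q : E × ℝ => (F q.1 q.2, (1 : ℝ))) (γ := fun t => (U t, t)) (x₀ := (U0, t0)) hat0
    (fun t ht => (hode t ht).prodMk (hasDerivAt_id t))
    (fun t ht => (hFU t ht).prod analyticAt_const) (hF0.prod analyticAt_const) hcluster
  have hsnd_deriv : ∀ t ∈ Ioo a (t0 + r), HasDerivAt (fun t => (V t).2) 1 t := fun t ht =>
    (hasFDerivAt_snd (𝕜 := ℝ) (p := V t)).comp_hasDerivAt t (hV t ht)
  have hsnd : ∀ t ∈ Ioo a (t0 + r), (V t).2 = t := fun t ht =>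
    isOpen_Ioo.eqOn_of_deriv_eq (f := fun t => (V t).2) (g := id) isPreconnected_Ioo
      (fun t ht => (hsnd_deriv t ht).differentiableAt.differentiableWithinAt) differentiableOn_id
      (fun t ht => by rw [(hsnd_deriv t ht).deriv, deriv_id])
      (x := t0) ⟨hat0, by linarith⟩ (congrArg Prod.snd hV0) ht
  refine ⟨(continuous_fst.tendsto _).comp hlim, r, hr, fun t => (V t).1,
    fun t ht => analyticAt_fst.comp (hVan t ht), fun t ht => congrArg Prod.fst (hVγ ht.2),
    congrArg Prod.fst hV0, fun t ht => ?_⟩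
  have hfst : HasDerivAt (fun t => (V t).1) (F (V t).1 (V t).2) t :=
    (hasFDerivAt_fst (𝕜 := ℝ) (p := V t)).comp_hasDerivAt t (hV t ht)
  rwa [hsnd t ht] at hfst

end NonAutonomous

/-- **Sequential criterion for continuation of real-analytic solutions (Theorem
`sequenza`).**  `ℝ^P` (modelled as `Fin P → ℝ`) carries the maximum coordinate norm.  Let
`U` be real-analytic on `(a,t0)`, a solution of `U' = F (U t) t` there, where `F` is
real-analytic on an open set `G` containing the graph of `U`, uniformly Lipschitz-like at
every point of `G`.  If `(U0, t0) ∈ G` and there is a strictly increasing sequence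
`t_h → t0` with `U (t_h) → U0`, then `U(t) → U0` as `t → t0⁻`, and consequently `U`
extends to a real-analytic solution of the same equation beyond `t0`. -/
theorem stmt_6 {P : ℕ} (a t0 : ℝ) (hat0 : a < t0)
    (U : ℝ → Fin P → ℝ)
    (hUan : ∀ t ∈ Ioo a t0, AnalyticAt ℝ U t)
    (G : Set ((Fin P → ℝ) × ℝ)) (hG : IsOpen G)
    (hmem : ∀ t ∈ Ioo a t0, ((U t, t) : (Fin P → ℝ) × ℝ) ∈ G)
    (F : (Fin P → ℝ) → ℝ → Fin P → ℝ)
    (hFan : ∀ p ∈ G, AnalyticAt ℝ (fun q : (Fin P → ℝ) × ℝ => F q.1 q.2) p)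
    (hlip : ∀ p ∈ G, ∃ K : ℝ, ∃ O ∈ nhds p,
      ∀ (A B : Fin P → ℝ) (t : ℝ), ((A, t) : (Fin P → ℝ) × ℝ) ∈ O →
        ((B, t) : (Fin P → ℝ) × ℝ) ∈ O → ‖F A t - F B t‖ ≤ K * ‖A - B‖)
    (hode : ∀ t ∈ Ioo a t0, HasDerivAt U (F (U t) t) t)
    (U0 : Fin P → ℝ) (hU0G : ((U0, t0) : (Fin P → ℝ) × ℝ) ∈ G)
    (ts : ℕ → ℝ) (hmono : StrictMono ts) (hts : ∀ h, ts h ∈ Ioo a t0)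
    (htends : Filter.Tendsto ts Filter.atTop (nhds t0))
    (hUts : Filter.Tendsto (fun h => U (ts h)) Filter.atTop (nhds U0)) :
    Filter.Tendsto U (nhdsWithin t0 (Iio t0)) (nhds U0) ∧
    ∃ r > (0 : ℝ), ∃ Uext : ℝ → Fin P → ℝ,
      (∀ t ∈ Ioo a (t0 + r), AnalyticAt ℝ Uext t) ∧
      (∀ t ∈ Ioo a t0, Uext t = U t) ∧ Uext t0 = U0 ∧
      (∀ t ∈ Ioo a (t0 + r), HasDerivAt Uext (F (Uext t) t) t) := by
  exact stmt_6_general hat0 (fun t ht => hFan _ (hmem t ht)) (hFan _ hU0G) hode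
    (.of_comp (tendsto_nhdsWithin_iff.mpr ⟨htends, .of_forall fun h => (hts h).2⟩)
      hUts.mapClusterPt)
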